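/- arXiv:0910.4715 — 3 statements merged into one kernel-verified Lean document; each statement's English description precedes it below -/
import Mathlib

section
/- Let m, n be natural numbers with 0 ≤ m ≤ n, and let x > 1 be real. Then d^m/dx^m [P_n(x)·log(x−1)] = P_n^{(m)}(x)·log(x−1) + (ψ(n+1) − ψ(n−m+1))·P_n^{(m)}(x) − (−1)^{n+m}·2^{−m} Σ_{k=0}^{n−m} (−1)^k·((k+n+m)!·ψ(k+n+m+1))/(k!·(k+m)!·(n−m−k)!) · ((x+1)/2)^k + (−1)^n·((n+m)!/(n−m)!)·(x−1)^{−m} Σ_{k=0}^{n} (−1)^k·((k+n)!·ψ(k+n+1))/(k!·(k+m)!·(n−k)!) · ((x+1)/2)^k. -/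
open Finset Real

/-- The Legendre polynomial `P_n`, via its explicit expansion
`P_n(x) = ∑_{k=0}^{n} ((n+k)!/((k!)² (n−k)!)) ((x−1)/2)^k`. -/
noncomputable def legendreP (n : ℕ) (x : ℝ) : ℝ :=
  ∑ k ∈ Finset.range (n + 1),
    (((n + k).factorial : ℝ) / (((k.factorial : ℝ)) ^ 2 * ((n - k).factorial : ℝ))) *
      ((x - 1) / 2) ^ k

/-- The harmonic number `H_i = ∑_{r=1}^{i} 1/r`. -/
noncomputable def harm (i : ℕ) : ℝ := ∑ r ∈ Finset.range i, (1 : ℝ) / (r + 1)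

/-- The digamma function at a positive integer `j`: `ψ(j) = H_{j−1} − γ`. -/
noncomputable def psi (j : ℕ) : ℝ := harm (j - 1) - Real.eulerMascheroniConstant

/-!
Both sides are `(x - 1) ^ (-m)` times an expression in `t = (x - 1) / 2`, and we compare the
coefficients of `t ^ j`. Let `D_m` be the falling factorial polynomial and
`T_m(a, s) = a * D_m(s) + d/ds D_m(s)`, the derivative at `ε = 0` of `exp (a * ε) * D_m(s + ε)`.

* The `m`-th derivative of `y ^ z * log y` is `y ^ (z - m) * T_m(log y, z)`, which gives the left
  side.
* The digamma sums, evaluated at `(x + 1) / 2 = 1 + t`, are finite differences at `0` of a product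
  of `(1 + t) ^ k` and `(k + c + d)! / (k + c)! * ψ(k + c + d + 1)`. By the Leibniz rule their
  coefficients are finite differences of the second factor, hence again values of some `T_l`.
* The resulting identity between the coefficients is the derivative at `s = n` of
  `D_l(s) * D_m(s - l) = D_m(s) * D_l(s - m)`, with `l = n - j`, combined with
  `T_m(a, n) = n! / (n - m)! * (a + ψ(n + 1) - ψ(n - m + 1))`.
-/

open Polynomial
open scoped Nat

section DescPochhammer

variable {R : Type*} [CommRing R]

/-- The derivative at `ε = 0` of `exp (a * ε) * (s + ε) * (s + ε - 1) * ⋯ * (s + ε - m + 1)`,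
written algebraically so that it makes sense in any commutative ring. Up to elementary factors
it is both the `m`-th derivative of `y ^ s * log y`, with `a = log y`, and the `m`-th finite
difference of `k ↦ (k + s)! / k! * ψ (k + s + 1)`, with `a = ψ (k + s + 1)`. -/
noncomputable def descPochhammerDeriv (m : ℕ) (a s : R) : R :=
  a * (descPochhammer R m).eval s + (derivative (descPochhammer R m)).eval s

lemma descPochhammerDeriv_zero (a s : R) : descPochhammerDeriv 0 a s = a := by
  simp [descPochhammerDeriv]

lemma descPochhammerDeriv_succ (m : ℕ) (a s : R) :
    descPochhammerDeriv (m + 1) a s =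
      descPochhammerDeriv m a s * (s - m) + (descPochhammer R m).eval s := by
  simp only [descPochhammerDeriv, descPochhammer_succ_right, derivative_mul, derivative_sub,
    derivative_X, derivative_natCast, eval_add, eval_mul, eval_sub, eval_X, eval_natCast, sub_zero,
    eval_one]
  ring

lemma descPochhammer_eval_add (l m : ℕ) (s : R) :
    (descPochhammer R (l + m)).eval s =
      (descPochhammer R l).eval s * (descPochhammer R m).eval (s - l) := by
  simp [← descPochhammer_mul]

lemma descPochhammerDeriv_add_add (l m : ℕ) (a b s : R) :
    descPochhammerDeriv (l + m) (a + b) s =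
      descPochhammerDeriv l a s * (descPochhammer R m).eval (s - l) +
        (descPochhammer R l).eval s * descPochhammerDeriv m b (s - l) := by
  simp only [descPochhammerDeriv, ← descPochhammer_mul, derivative_mul, derivative_comp,
    derivative_sub, derivative_X, derivative_natCast, eval_add, eval_mul, eval_comp, eval_sub,
    eval_X, eval_natCast, sub_zero, eval_one]
  ring

lemma descPochhammer_eval_mul_comm (l m : ℕ) (s : R) :
    (descPochhammer R l).eval s * (descPochhammer R m).eval (s - l) =
      (descPochhammer R m).eval s * (descPochhammer R l).eval (s - m) := by
  rw [← descPochhammer_eval_add, ← descPochhammer_eval_add, add_comm]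

lemma descPochhammerDeriv_mul_comm (l m : ℕ) (a b s : R) :
    descPochhammerDeriv l a s * (descPochhammer R m).eval (s - l) +
        (descPochhammer R l).eval s * descPochhammerDeriv m b (s - l) =
      descPochhammerDeriv m b s * (descPochhammer R l).eval (s - m) +
        (descPochhammer R m).eval s * descPochhammerDeriv l a (s - m) := by
  rw [← descPochhammerDeriv_add_add, ← descPochhammerDeriv_add_add, add_comm l, add_comm a]

lemma descPochhammer_eval_natCast_add {K : Type*} [Field K] [CharZero K] (m p : ℕ) :
    (descPochhammer K m).eval ((m + p : ℕ) : K) = (m + p)! / p ! := by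
  rw [descPochhammer_eval_eq_descFactorial, eq_div_iff (mod_cast p.factorial_ne_zero), mul_comm]
  have h := Nat.factorial_mul_descFactorial (Nat.le_add_right m p)
  rw [Nat.add_sub_cancel_left] at h
  exact_mod_cast h

end DescPochhammer

section Psi

lemma psi_succ {j : ℕ} (hj : j ≠ 0) : psi (j + 1) = psi j + 1 / j := by
  obtain ⟨i, rfl⟩ := Nat.exists_eq_succ_of_ne_zero hj
  simp only [psi, harm, Nat.add_sub_cancel, Nat.succ_eq_add_one, sum_range_succ, Nat.cast_add,
    Nat.cast_one]
  ring

lemma descPochhammerDeriv_natCast_add (m p : ℕ) (a : ℝ) :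
    descPochhammerDeriv m a ((m + p : ℕ) : ℝ) =
      (m + p)! / p ! * (a + psi (m + p + 1) - psi (p + 1)) := by
  induction m generalizing p with
  | zero => simp [descPochhammerDeriv_zero, p.factorial_ne_zero]
  | succ m ih =>
    rw [descPochhammerDeriv_succ, show m + 1 + p = m + (p + 1) by ring, ih,
      descPochhammer_eval_natCast_add, psi_succ p.succ_ne_zero, Nat.factorial_succ p]
    push_cast
    field_simp
    ring

end Psi

section FwdDiff

lemma fwdDiff_iter_mul {M R : Type*} [AddCommMonoid M] [Ring R] (h : M) (f g : M → R) (n : ℕ)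
    (y : M) :
    (fwdDiff h)^[n] (f * g) y =
      ∑ i ∈ range (n + 1),
        (n.choose i : R) * ((fwdDiff h)^[i] f y * (fwdDiff h)^[n - i] g (y + i • h)) := by
  induction n generalizing f g y with
  | zero => simp
  | succ n ih =>
    have leibniz : fwdDiff h (f * g) = f * fwdDiff h g + fwdDiff h f * fun z ↦ g (z + h) := by
      ext z
      simp only [fwdDiff, Pi.mul_apply, Pi.add_apply, mul_sub, sub_mul]
      abel
    rw [Function.iterate_succ_apply, leibniz, fwdDiff_iter_add, Pi.add_apply, ih, ih,
      sum_choose_succ_mul fun i j ↦ (fwdDiff h)^[i] f y * (fwdDiff h)^[j] g (y + i • h)]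
    congr 1
    · refine sum_congr rfl fun i hi ↦ ?_
      rw [Nat.succ_sub (mem_range_succ_iff.1 hi), Function.iterate_succ_apply]
    · simp only [fwdDiff_iter_comp_add, Function.iterate_succ_apply, succ_nsmul, add_assoc]

lemma fwdDiff_iter_const_pow {R : Type*} [CommRing R] (r : R) (n k : ℕ) :
    (fwdDiff 1)^[n] (fun i : ℕ ↦ r ^ i) k = (r - 1) ^ n * r ^ k := by
  induction n generalizing k with
  | zero => simp
  | succ n ih =>
    rw [Function.iterate_succ_apply', fwdDiff, ih, ih]
    ring

lemma fwdDiff_iter_factorial_div_mul_psi (d n k : ℕ) :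
    (fwdDiff 1)^[n] (fun i : ℕ ↦ ((i + d)! / i ! : ℝ) * psi (i + d + 1)) k =
      (k + d)! / (k + n)! * descPochhammerDeriv n (psi (k + d + 1)) (d : ℝ) := by
  induction n generalizing k with
  | zero => simp [descPochhammerDeriv_zero]
  | succ n ih =>
    have shift_psi : descPochhammerDeriv n (psi (k + d + 1 + 1)) (d : ℝ) =
        descPochhammerDeriv n (psi (k + d + 1)) (d : ℝ) +
          1 / (k + d + 1) * (descPochhammer ℝ n).eval (d : ℝ) := by
      rw [psi_succ (j := k + d + 1) (by omega)]
      simp only [descPochhammerDeriv]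
      push_cast
      ring
    rw [Function.iterate_succ_apply', fwdDiff, ih, ih, descPochhammerDeriv_succ,
      Nat.add_right_comm k 1 d, shift_psi, Nat.add_right_comm k 1 n, ← Nat.add_assoc k n 1,
      Nat.factorial_succ, Nat.factorial_succ]
    push_cast
    field_simp
    ring

end FwdDiff

section PsiSum

/-- The digamma sums in the formula for the `m`-th derivative of `P_n(x) log (x - 1)`: both have
`c = m` and `y = (x + 1) / 2`, the first with `N = n - m` and `d = n`, the second with `N = n` and
`d = n - m`. -/
noncomputable def psiSum (N c d : ℕ) (y : ℝ) : ℝ :=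
  ∑ k ∈ range (N + 1),
    (-1) ^ k * ((k + c + d)! * psi (k + c + d + 1)) / (k ! * (k + c)! * (N - k)!) * y ^ k

lemma neg_one_pow_mul_psiSum (N c d : ℕ) (y : ℝ) :
    (-1) ^ N * psiSum N c d y = 1 / N ! *
      (fwdDiff 1)^[N] ((fun k : ℕ ↦ y ^ k) *
        fun k : ℕ ↦ ((k + c + d)! / (k + c)! : ℝ) * psi (k + c + d + 1)) 0 := by
  rw [fwdDiff_iter_eq_sum_shift, mul_sum, psiSum, mul_sum]
  refine sum_congr rfl fun k hk ↦ ?_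
  obtain ⟨e, rfl⟩ := Nat.exists_eq_add_of_le (mem_range_succ_iff.1 hk)
  have sign : (-1 : ℝ) ^ (k + e) * (-1) ^ k = (-1) ^ e := by
    rw [pow_add, mul_right_comm, ← mul_pow]
    norm_num
  simp only [Pi.mul_apply, zsmul_eq_mul, smul_eq_mul, mul_one, zero_add, Int.cast_mul,
    Int.cast_pow, Int.cast_neg, Int.cast_one, Int.cast_natCast, Nat.add_sub_cancel_left,
    Nat.cast_add_choose, ← sign]
  field_simp

lemma neg_one_pow_mul_psiSum_one_add (N c d : ℕ) (t : ℝ) :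
    (-1) ^ N * psiSum N c d (1 + t) = ∑ j ∈ range (N + 1),
      (j + c + d)! / (j ! * (N - j)! * (N + c)!) *
        descPochhammerDeriv (N - j) (psi (j + c + d + 1)) (d : ℝ) * t ^ j := by
  rw [neg_one_pow_mul_psiSum, fwdDiff_iter_mul, mul_sum]
  refine sum_congr rfl fun j hj ↦ ?_
  have hjN : j ≤ N := mem_range_succ_iff.1 hj
  rw [fwdDiff_iter_const_pow,
    fwdDiff_iter_comp_add 1 (fun i : ℕ ↦ ((i + d)! / i ! : ℝ) * psi (i + d + 1)) c,
    fwdDiff_iter_factorial_div_mul_psi, Nat.cast_choose ℝ hjN]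
  simp only [zero_add, smul_eq_mul, mul_one, add_sub_cancel_left, pow_zero]
  rw [show j + c + (N - j) = N + c by omega]
  field_simp

lemma neg_one_pow_mul_pow_mul_psiSum_one_add (m p : ℕ) (t : ℝ) :
    (-1) ^ p * (t ^ m * psiSum p m (m + p) (1 + t)) = ∑ j ∈ range (m + p + 1),
      (m + p + j)! / (j ! * (m + p - j)! * (m + p)!) * (descPochhammer ℝ m).eval (j : ℝ) *
        descPochhammerDeriv (m + p - j) (psi (m + p + j + 1)) ((m + p : ℕ) : ℝ) * t ^ j := by
  have low : ∀ j ∈ range m, (descPochhammer ℝ m).eval (j : ℝ) = 0 := fun j hj ↦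
    descPochhammer_eval_coe_nat_of_lt (mem_range.1 hj)
  rw [mul_left_comm, neg_one_pow_mul_psiSum_one_add, add_assoc m p 1, sum_range_add _ m,
    sum_eq_zero (s := range m) fun j hj ↦ by rw [low j hj]; ring, zero_add, mul_sum]
  refine sum_congr rfl fun q _ ↦ ?_
  rw [descPochhammer_eval_natCast_add, Nat.add_sub_add_left, Nat.add_comm q m,
    Nat.add_comm (m + q) (m + p), Nat.add_comm p m, pow_add]
  field_simp

end PsiSum

section Legendre

/-- The coefficient of `((x - 1) / 2) ^ k` in the Legendre polynomial `P_n(x)`. -/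
noncomputable def legendreCoeff (n k : ℕ) : ℝ := (n + k)! / ((k ! : ℝ) ^ 2 * (n - k)!)

lemma factorial_div_mul_descPochhammerDeriv {m p l j : ℕ} (h : m + p = l + j) (a b : ℝ) :
    (m + p)! / j ! * descPochhammerDeriv m b (j : ℝ) =
      (b + (psi (m + p + 1) - psi (p + 1))) *
          ((m + p)! / j ! * (descPochhammer ℝ m).eval (j : ℝ)) -
        (descPochhammer ℝ m).eval (j : ℝ) * descPochhammerDeriv l a ((m + p : ℕ) : ℝ) +
        (m + p)! / p ! * descPochhammerDeriv l a (p : ℝ) := by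
  have hj : ((m + p : ℕ) : ℝ) - l = j := by rw [h]; push_cast; ring
  have hp : ((m + p : ℕ) : ℝ) - m = p := by push_cast; ring
  have hl : (descPochhammer ℝ l).eval ((m + p : ℕ) : ℝ) = (m + p)! / j ! := by
    rw [h, descPochhammer_eval_natCast_add]
  have eval_comm := descPochhammer_eval_mul_comm l m ((m + p : ℕ) : ℝ)
  have deriv_comm := descPochhammerDeriv_mul_comm l m a b ((m + p : ℕ) : ℝ)
  rw [hj, hp, hl, descPochhammer_eval_natCast_add] at eval_comm deriv_comm
  rw [descPochhammerDeriv_natCast_add] at deriv_comm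
  linear_combination deriv_comm - (b + (psi (m + p + 1) - psi (p + 1))) * eval_comm

lemma sum_legendreCoeff_mul_descPochhammerDeriv (m p : ℕ) (b t : ℝ) :
    ∑ j ∈ range (m + p + 1), legendreCoeff (m + p) j * descPochhammerDeriv m b (j : ℝ) * t ^ j =
      (b + (psi (m + p + 1) - psi (p + 1))) * ∑ j ∈ range (m + p + 1),
          legendreCoeff (m + p) j * (descPochhammer ℝ m).eval (j : ℝ) * t ^ j -
        (-1) ^ p * (t ^ m * psiSum p m (m + p) (1 + t)) +
        (m + p + m)! / p ! * ((-1) ^ (m + p) * psiSum (m + p) m p (1 + t)) := by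
  rw [neg_one_pow_mul_pow_mul_psiSum_one_add, neg_one_pow_mul_psiSum_one_add, mul_sum, mul_sum,
    ← sum_sub_distrib, ← sum_add_distrib]
  refine sum_congr rfl fun j hj ↦ ?_
  have hl : m + p = m + p - j + j := (Nat.sub_add_cancel (mem_range_succ_iff.1 hj)).symm
  have key := factorial_div_mul_descPochhammerDeriv hl (psi (m + p + j + 1)) b
  rw [legendreCoeff, add_assoc j m p, Nat.add_comm j (m + p)]
  have hn : ((m + p)! : ℝ) ≠ 0 := mod_cast (m + p).factorial_ne_zero
  calc
    _ = (m + p + j)! / (j ! * (m + p - j)! * (m + p)!) * t ^ j *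
        ((m + p)! / j ! * descPochhammerDeriv m b (j : ℝ)) := by field_simp
    _ = _ := by
      rw [key]
      field_simp

lemma iteratedDeriv_zpow_mul_log (z : ℤ) (m : ℕ) {x : ℝ} (hx : x ≠ 0) :
    iteratedDeriv m (fun y ↦ y ^ z * log y) x =
      x ^ (z - m) * descPochhammerDeriv m (log x) (z : ℝ) := by
  induction m generalizing x with
  | zero => simp [descPochhammerDeriv_zero]
  | succ m ih =>
    have near_x : iteratedDeriv m (fun y ↦ y ^ z * log y) =ᶠ[nhds x]
        fun y ↦ y ^ (z - m) * descPochhammerDeriv m (log y) (z : ℝ) := by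
      filter_upwards [isOpen_ne.mem_nhds hx] with y hy using ih hy
    have hasDeriv_log : HasDerivAt (fun y ↦ descPochhammerDeriv m (log y) (z : ℝ))
        (x⁻¹ * (descPochhammer ℝ m).eval (z : ℝ)) x :=
      ((hasDerivAt_log hx).mul_const _).add_const _
    rw [iteratedDeriv_succ, near_x.deriv_eq,
      ((hasDerivAt_zpow (z - m) x (Or.inl hx)).fun_mul hasDeriv_log).deriv,
      descPochhammerDeriv_succ, show z - ((m + 1 : ℕ) : ℤ) = z - m - 1 by push_cast; ring,
      zpow_sub_one₀ hx]
    push_cast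
    ring

lemma iteratedDeriv_zpow_eq_descPochhammer (z : ℤ) (m : ℕ) (x : ℝ) :
    iteratedDeriv m (fun y ↦ y ^ z) x = x ^ (z - m) * (descPochhammer ℝ m).eval (z : ℝ) := by
  rw [iteratedDeriv_eq_iterate, iter_deriv_zpow, descPochhammer_eval_eq_prod_range, mul_comm]

lemma iteratedDeriv_legendreP_mul {w : ℝ → ℝ} {T : ℕ → ℝ} {m : ℕ} {x : ℝ} (n : ℕ) (hx : x ≠ 1)
    (hw : ContDiffAt ℝ m w (x - 1))
    (hT : ∀ k : ℕ, iteratedDeriv m (fun u ↦ u ^ (k : ℤ) * w u) (x - 1) =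
      (x - 1) ^ ((k : ℤ) - m) * T k) :
    iteratedDeriv m (fun y ↦ legendreP n y * w (y - 1)) x =
      (x - 1) ^ (-(m : ℤ)) *
        ∑ k ∈ range (n + 1), legendreCoeff n k * T k * ((x - 1) / 2) ^ k := by
  let g (u : ℝ) : ℝ := ∑ k ∈ range (n + 1), legendreCoeff n k / 2 ^ k * (u ^ (k : ℤ) * w u)
  have expand : (fun y ↦ legendreP n y * w (y - 1)) = fun y ↦ g (y - 1) := by
    funext y
    simp only [g, legendreP, legendreCoeff, sum_mul, zpow_natCast, div_pow]
    exact sum_congr rfl fun k _ ↦ by ring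
  rw [expand, iteratedDeriv_comp_sub_const]
  dsimp only [g]
  rw [iteratedDeriv_fun_sum fun k _ ↦ by simp only [zpow_natCast]; fun_prop, mul_sum]
  refine sum_congr rfl fun k _ ↦ ?_
  rw [iteratedDeriv_const_mul_field, hT, sub_eq_neg_add (k : ℤ), zpow_add₀ (sub_ne_zero.2 hx),
    zpow_natCast, div_pow]
  ring

lemma iteratedDeriv_legendreP (m n : ℕ) {x : ℝ} (hx : x ≠ 1) :
    iteratedDeriv m (legendreP n) x = (x - 1) ^ (-(m : ℤ)) * ∑ k ∈ range (n + 1),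
      legendreCoeff n k * (descPochhammer ℝ m).eval (k : ℝ) * ((x - 1) / 2) ^ k := by
  simpa only [mul_one] using iteratedDeriv_legendreP_mul n hx (w := fun _ ↦ 1) contDiffAt_const
    fun k ↦ by simpa using iteratedDeriv_zpow_eq_descPochhammer k m (x - 1)

lemma iteratedDeriv_legendreP_mul_log (m n : ℕ) {x : ℝ} (hx : x ≠ 1) :
    iteratedDeriv m (fun y ↦ legendreP n y * log (y - 1)) x =
      (x - 1) ^ (-(m : ℤ)) * ∑ k ∈ range (n + 1),
        legendreCoeff n k * descPochhammerDeriv m (log (x - 1)) (k : ℝ) * ((x - 1) / 2) ^ k :=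
  have hx' : x - 1 ≠ 0 := sub_ne_zero.2 hx
  iteratedDeriv_legendreP_mul n hx (contDiffAt_log.2 hx') fun k ↦ by
    simpa using iteratedDeriv_zpow_mul_log k m hx'

end Legendre

theorem stmt_1_general {m n : ℕ} (hmn : m ≤ n) {x : ℝ} (hx : x ≠ 1) :
    iteratedDeriv m (fun y => legendreP n y * Real.log |y - 1|) x =
      iteratedDeriv m (legendreP n) x * Real.log |x - 1|
      + (psi (n + 1) - psi (n - m + 1)) * iteratedDeriv m (legendreP n) x
      - (-1 : ℝ) ^ (n + m) * (2 : ℝ) ^ (-(m : ℤ)) *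
          ∑ k ∈ Finset.range (n - m + 1),
            (-1 : ℝ) ^ k * (((k + n + m).factorial : ℝ) * psi (k + n + m + 1)) /
                ((k.factorial : ℝ) * ((k + m).factorial : ℝ) * ((n - m - k).factorial : ℝ)) *
              ((x + 1) / 2) ^ k
      + (-1 : ℝ) ^ n * ((n + m).factorial : ℝ) / ((n - m).factorial : ℝ) *
            (x - 1) ^ (-(m : ℤ)) *
          ∑ k ∈ Finset.range (n + 1),
            (-1 : ℝ) ^ k * (((k + n).factorial : ℝ) * psi (k + n + 1)) /
                ((k.factorial : ℝ) * ((k + m).factorial : ℝ) * ((n - k).factorial : ℝ)) *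
              ((x + 1) / 2) ^ k := by
  simp only [log_abs]
  obtain ⟨p, rfl⟩ := Nat.exists_eq_add_of_le hmn
  have point : (x + 1) / 2 = 1 + (x - 1) / 2 := by ring
  have two_zpow : (2 : ℝ) ^ (-(m : ℤ)) = (x - 1) ^ (-(m : ℤ)) * ((x - 1) / 2) ^ m := by
    rw [div_pow, zpow_neg, zpow_neg, zpow_natCast, zpow_natCast]
    field_simp [sub_ne_zero.2 hx]
  have sign : (-1 : ℝ) ^ (m + p + m) = (-1) ^ p := by
    rw [add_right_comm, pow_add, ← two_mul, pow_mul, neg_one_sq, one_pow, one_mul]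
  have index (k : ℕ) : k + m + (m + p) = k + (m + p) + m := by ring
  rw [iteratedDeriv_legendreP_mul_log _ _ hx, iteratedDeriv_legendreP _ _ hx,
    sum_legendreCoeff_mul_descPochhammerDeriv, point, two_zpow, sign, Nat.add_sub_cancel_left]
  simp only [psiSum, index, add_assoc _ m p]
  ring

theorem stmt_1 (m n : ℕ) (hmn : m ≤ n) (x : ℝ) (hx : 1 < x) :
    iteratedDeriv m (fun y => legendreP n y * Real.log (y - 1)) x =
      iteratedDeriv m (legendreP n) x * Real.log (x - 1)
      + (psi (n + 1) - psi (n - m + 1)) * iteratedDeriv m (legendreP n) x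
      - (-1 : ℝ) ^ (n + m) * (2 : ℝ) ^ (-(m : ℤ)) *
          ∑ k ∈ Finset.range (n - m + 1),
            (-1 : ℝ) ^ k * (((k + n + m).factorial : ℝ) * psi (k + n + m + 1)) /
                ((k.factorial : ℝ) * ((k + m).factorial : ℝ) * ((n - m - k).factorial : ℝ)) *
              ((x + 1) / 2) ^ k
      + (-1 : ℝ) ^ n * ((n + m).factorial : ℝ) / ((n - m).factorial : ℝ) *
            (x - 1) ^ (-(m : ℤ)) *
          ∑ k ∈ Finset.range (n + 1),
            (-1 : ℝ) ^ k * (((k + n).factorial : ℝ) * psi (k + n + 1)) /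
                ((k.factorial : ℝ) * ((k + m).factorial : ℝ) * ((n - k).factorial : ℝ)) *
              ((x + 1) / 2) ^ k := by
  simpa only [log_abs] using stmt_1_general hmn hx.ne'
end

section
/- Let m, n be natural numbers with 0 ≤ m ≤ n, and let x > 1 be real. Then d^m/dx^m [P_n(x)·log(x+1)] = P_n^{(m)}(x)·log(x+1) − (ψ(n+m+1) − 2ψ(n+1) + ψ(n−m+1))·P_n^{(m)}(x) − 2^{−m} Σ_{k=0}^{n−m} ((k+n+m)!·ψ(k+m+1))/(k!·(k+m)!·(n−m−k)!) · ((x−1)/2)^k + ((n+m)!/(n−m)!)·(x+1)^{−m} Σ_{k=0}^{n} ((k+n)!·ψ(k+m+1))/(k!·(k+m)!·(n−k)!) · ((x−1)/2)^k. -/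
open Finset Real

/-!
Euler's transformation of `₂F₁` turns the Taylor expansion of `P_n^{(m)}` at `1` into
`(n+m)!/(n-m)! (x+1)^{-m}` times a polynomial of degree `n`. Weight the terms of both expansions by
`f (k + m)`. Differentiating the weighted Taylor expansion just raises `m` by one. The same holds
for the weighted Euler expansion up to an error linear in the increments of `f`: for `f = 1` the
error vanishes, and for `f j = ψ(j + 1)`, where `ψ(j + 2) - ψ(j + 1) = 1/(j + 1)`, it cancels
`P_n^{(m)}(x)/(x + 1)`, which comes from the logarithm, together with the increment in `m` of
`ψ(n+m+1) - 2ψ(n+1) + ψ(n-m+1)`. So the right-hand sides for `m = 0, 1, …, n` are successive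
derivatives of each other.
-/

section IteratedDeriv

variable {𝕜 E : Type*} [NontriviallyNormedField 𝕜] [NormedAddCommGroup E] [NormedSpace 𝕜 E]

lemma iteratedDeriv_eqOn_of_forall_hasDerivAt {F : ℕ → 𝕜 → E} {s : Set 𝕜} (hs : IsOpen s)
    {m : ℕ} (hF : ∀ k < m, ∀ x ∈ s, HasDerivAt (F k) (F (k + 1) x) x) :
    s.EqOn (iteratedDeriv m (F 0)) (F m) := by
  induction m with
  | zero => exact fun x _ => by rw [iteratedDeriv_zero]
  | succ m ih =>
    intro x hx
    have ih' : s.EqOn (iteratedDeriv m (F 0)) (F m) :=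
      ih fun k hk => hF k (hk.trans m.lt_succ_self)
    rw [iteratedDeriv_succ, (ih'.eventuallyEq_of_mem (hs.mem_nhds hx)).deriv_eq]
    exact (hF m m.lt_succ_self x hx).deriv

lemma hasDerivAt_sum_range_succ_mul_pow (a : ℕ → 𝕜) (N : ℕ) (t : 𝕜) :
    HasDerivAt (fun t => ∑ k ∈ range (N + 1), a k * t ^ k)
      (∑ k ∈ range N, (k + 1) * a (k + 1) * t ^ k) t := by
  have h : HasDerivAt (fun t => ∑ k ∈ range (N + 1), a k * t ^ k)
      (∑ k ∈ range (N + 1), a k * (k * t ^ (k - 1))) t :=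
    HasDerivAt.fun_sum fun k _ => (hasDerivAt_pow k t).const_mul (a k)
  refine h.congr_deriv ?_
  rw [sum_range_succ']
  simp only [Nat.cast_zero, zero_mul, mul_zero, add_zero]
  refine sum_congr rfl fun k _ => ?_
  rw [Nat.add_sub_cancel]
  push_cast
  ring

end IteratedDeriv

lemma factorial_add_div_factorial_sub_succ {m n : ℕ} (h : m < n) :
    ((n + (m + 1)).factorial : ℝ) / (n - (m + 1)).factorial =
      (n + m).factorial / (n - m).factorial * ((n + m + 1) * (n - m)) := by
  obtain ⟨d, rfl⟩ := Nat.exists_eq_add_of_lt h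
  rw [show m + d + 1 - (m + 1) = d by omega, show m + d + 1 - m = d + 1 by omega, ← add_assoc,
    Nat.factorial_succ d, Nat.factorial_succ (m + d + 1 + m)]
  push_cast
  field_simp
  ring

lemma hasDerivAt_sub_one_div_two (x : ℝ) : HasDerivAt (fun y : ℝ => (y - 1) / 2) (1 / 2) x :=
  ((hasDerivAt_id x).sub_const 1).div_const 2

lemma psi_add_two (j : ℕ) : psi (j + 2) = psi (j + 1) + 1 / ((j : ℝ) + 1) := by
  rw [psi, psi, show j + 2 - 1 = j + 1 by omega, Nat.add_sub_cancel, harm, sum_range_succ, ← harm]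
  ring

lemma psi_second_difference_succ {m n : ℕ} (h : m < n) :
    psi (n + (m + 1) + 1) - 2 * psi (n + 1) + psi (n - (m + 1) + 1) =
      psi (n + m + 1) - 2 * psi (n + 1) + psi (n - m + 1) +
        (1 / ((n : ℝ) + m + 1) - 1 / ((n : ℝ) - m)) := by
  obtain ⟨d, rfl⟩ := Nat.exists_eq_add_of_lt h
  have upper := psi_add_two (m + d + 1 + m)
  have lower := psi_add_two d
  rw [show m + d + 1 + (m + 1) + 1 = m + d + 1 + m + 2 by ring,
    show m + d + 1 - (m + 1) + 1 = d + 1 by omega, show m + d + 1 - m + 1 = d + 2 by omega,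
    upper, lower]
  push_cast
  ring

namespace legendreP

/-- The coefficient of `t ^ k` in the Taylor expansion of `2 ^ m * P_n^{(m)}(1 + 2 * t)` at
`t = 0`, for `k + m ≤ n`. -/
noncomputable def taylorCoeff (n m k : ℕ) : ℝ :=
  (k + n + m).factorial / (k.factorial * (k + m).factorial * (n - m - k).factorial)

/-- The coefficient of `t ^ k` in `₂F₁(-n, n + 1; m + 1; -t) / m!`, for `k ≤ n`. Euler's
transformation leads to this polynomial because `P_n^{(m)}(1 + 2 * t)` is a constant multiple of
`₂F₁(m - n, n + m + 1; m + 1; -t) = (1 + t) ^ (-m) * ₂F₁(-n, n + 1; m + 1; -t)`. -/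
noncomputable def eulerCoeff (n m k : ℕ) : ℝ :=
  (k + n).factorial / (k.factorial * (k + m).factorial * (n - k).factorial)

/-- The Taylor polynomial with coefficients `taylorCoeff n m k`, each weighted by `f (k + m)`. -/
noncomputable def taylorSum (f : ℕ → ℝ) (n m : ℕ) (t : ℝ) : ℝ :=
  ∑ k ∈ range (n - m + 1), taylorCoeff n m k * f (k + m) * t ^ k

/-- The polynomial with coefficients `eulerCoeff n m k`, each weighted by `f (k + m)`. -/
noncomputable def eulerSum (f : ℕ → ℝ) (n m : ℕ) (t : ℝ) : ℝ :=
  ∑ k ∈ range (n + 1), eulerCoeff n m k * f (k + m) * t ^ k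

/-- The Taylor expansion at `1` of `P_n^{(m)}`, for `m ≤ n`, with the coefficient of index `k`
weighted by `f (k + m)`; `f j = ψ (j + 1)` gives the first sum of the theorem. -/
noncomputable def taylorForm (f : ℕ → ℝ) (n m : ℕ) (x : ℝ) : ℝ :=
  2 ^ (-(m : ℤ)) * taylorSum f n m ((x - 1) / 2)

/-- The Euler transform of the Taylor expansion of `P_n^{(m)}`, for `m ≤ n`, with the coefficient of
index `k` weighted by `f (k + m)`; `f j = ψ (j + 1)` gives the second sum of the theorem. -/
noncomputable def eulerForm (f : ℕ → ℝ) (n m : ℕ) (x : ℝ) : ℝ :=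
  (n + m).factorial / (n - m).factorial * (x + 1) ^ (-(m : ℤ)) * eulerSum f n m ((x - 1) / 2)

/-- The closed form of the `m`-th derivative of `P_n(x) * log (x + 1)`. -/
noncomputable def mulLogDeriv (n m : ℕ) (x : ℝ) : ℝ :=
  iteratedDeriv m (legendreP n) x * log (x + 1)
    - (psi (n + m + 1) - 2 * psi (n + 1) + psi (n - m + 1)) * iteratedDeriv m (legendreP n) x
    - taylorForm (fun j => psi (j + 1)) n m x + eulerForm (fun j => psi (j + 1)) n m x

lemma succ_mul_taylorCoeff_succ (n m k : ℕ) :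
    (k + 1) * taylorCoeff n m (k + 1) = taylorCoeff n (m + 1) k := by
  rw [taylorCoeff, taylorCoeff, show n - m - (k + 1) = n - (m + 1) - k by omega,
    show k + 1 + n + m = k + n + (m + 1) by ring, show k + 1 + m = k + (m + 1) by ring,
    Nat.factorial_succ k]
  push_cast
  field_simp

lemma eulerCoeff_eq_mul (n m k : ℕ) :
    eulerCoeff n m k = (k + m + 1) * eulerCoeff n (m + 1) k := by
  rw [eulerCoeff, eulerCoeff, ← add_assoc, Nat.factorial_succ (k + m)]
  push_cast
  field_simp

lemma succ_mul_eulerCoeff_succ {n k : ℕ} (m : ℕ) (h : k < n) :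
    (k + 1) * eulerCoeff n m (k + 1) = (n + k + 1) * (n - k) * eulerCoeff n (m + 1) k := by
  obtain ⟨d, rfl⟩ := Nat.exists_eq_add_of_lt h
  rw [eulerCoeff, eulerCoeff, show k + d + 1 - (k + 1) = d by omega,
    show k + d + 1 - k = d + 1 by omega, show k + 1 + (k + d + 1) = k + (k + d + 1) + 1 by ring,
    show k + 1 + m = k + (m + 1) by ring, Nat.factorial_succ (k + (k + d + 1)),
    Nat.factorial_succ k, Nat.factorial_succ d]
  push_cast
  field_simp
  ring

lemma hasDerivAt_taylorSum (f : ℕ → ℝ) {m n : ℕ} (h : m < n) (t : ℝ) :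
    HasDerivAt (taylorSum f n m) (taylorSum f n (m + 1) t) t := by
  refine (hasDerivAt_sum_range_succ_mul_pow (fun k => taylorCoeff n m k * f (k + m)) (n - m)
    t).congr_deriv ?_
  rw [taylorSum, show n - (m + 1) + 1 = n - m by omega]
  refine sum_congr rfl fun k _ => ?_
  rw [← succ_mul_taylorCoeff_succ, show k + 1 + m = k + (m + 1) by ring]
  ring

lemma hasDerivAt_taylorForm (f : ℕ → ℝ) {m n : ℕ} (h : m < n) (x : ℝ) :
    HasDerivAt (taylorForm f n m) (taylorForm f n (m + 1) x) x := by
  refine (((hasDerivAt_taylorSum f h _).comp x (hasDerivAt_sub_one_div_two x)).const_mul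
    ((2 : ℝ) ^ (-(m : ℤ)))).congr_deriv ?_
  rw [taylorForm, Nat.cast_succ, neg_add, zpow_add₀ two_ne_zero, zpow_neg_one]
  ring

lemma hasDerivAt_eulerSum (f : ℕ → ℝ) (n m : ℕ) (t : ℝ) :
    HasDerivAt (eulerSum f n m)
      (∑ k ∈ range n, (k + 1) * (eulerCoeff n m (k + 1) * f (k + 1 + m)) * t ^ k) t :=
  hasDerivAt_sum_range_succ_mul_pow (fun k => eulerCoeff n m k * f (k + m)) n t

lemma deriv_eulerSum (f : ℕ → ℝ) (n m : ℕ) (t : ℝ) :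
    deriv (eulerSum f n m) t =
      ∑ k ∈ range (n + 1),
        (n + k + 1) * (n - k) * eulerCoeff n (m + 1) k * f (k + m + 1) * t ^ k := by
  rw [(hasDerivAt_eulerSum f n m t).deriv, sum_range_succ _ n]
  simp only [sub_self, mul_zero, zero_mul, add_zero]
  refine sum_congr rfl fun k hk => ?_
  rw [← succ_mul_eulerCoeff_succ m (mem_range.1 hk), add_right_comm k 1 m]
  ring

lemma mul_deriv_eulerSum (f : ℕ → ℝ) (n m : ℕ) (t : ℝ) :
    t * deriv (eulerSum f n m) t =
      ∑ k ∈ range (n + 1), k * eulerCoeff n m k * f (k + m) * t ^ k := by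
  rw [(hasDerivAt_eulerSum f n m t).deriv, sum_range_succ', mul_sum]
  simp only [Nat.cast_zero, zero_mul, add_zero]
  refine sum_congr rfl fun k _ => ?_
  push_cast
  ring

variable {f : ℕ → ℝ} {c : ℝ}

lemma one_add_mul_deriv_eulerSum_sub (hf : ∀ j : ℕ, f (j + 1) = f j + c / (j + 1))
    (n m : ℕ) (t : ℝ) :
    (1 + t) * deriv (eulerSum f n m) t - m * eulerSum f n m t =
      (n + m + 1) * (n - m) * eulerSum f n (m + 1) t -
        c * (eulerSum 1 n m t - (2 * m + 1) * eulerSum 1 n (m + 1) t) := by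
  rw [add_mul, one_mul, mul_deriv_eulerSum, deriv_eulerSum]
  simp only [eulerSum, mul_sum, ← sum_add_distrib, ← sum_sub_distrib]
  refine sum_congr rfl fun k _ => ?_
  have hk : (k : ℝ) + m + 1 ≠ 0 := by positivity
  rw [← add_assoc, hf (k + m), eulerCoeff_eq_mul n m k, Pi.one_apply, Pi.one_apply]
  push_cast
  field_simp
  ring

lemma hasDerivAt_eulerForm (hf : ∀ j : ℕ, f (j + 1) = f j + c / (j + 1))
    {m n : ℕ} (h : m < n) {x : ℝ} (hx : x ≠ -1) :
    HasDerivAt (eulerForm f n m)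
      (eulerForm f n (m + 1) x - c * (eulerForm 1 n m x / (x + 1) +
        (1 / ((n : ℝ) + m + 1) - 1 / ((n : ℝ) - m)) * eulerForm 1 n (m + 1) x)) x := by
  have hx' : x + 1 ≠ 0 := fun hx₀ => hx (eq_neg_of_add_eq_zero_left hx₀)
  have hpow : HasDerivAt (fun y : ℝ => (y + 1) ^ (-(m : ℤ)))
      (-m * (x + 1) ^ (-(m : ℤ) - 1)) x := by
    simpa using (hasDerivAt_zpow (-(m : ℤ)) (x + 1) (.inl hx')).comp_add_const x 1
  have hsum := (hasDerivAt_eulerSum f n m _).differentiableAt.hasDerivAt.comp x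
    (hasDerivAt_sub_one_div_two x)
  refine ((hpow.const_mul _).mul hsum).congr_deriv ?_
  have hsub : (n : ℝ) - m ≠ 0 := sub_ne_zero.2 (by exact_mod_cast h.ne')
  have hadd : (n : ℝ) + m + 1 ≠ 0 := by positivity
  have hzpow : (x + 1) ^ (-(m : ℤ)) = (x + 1) ^ (-(m : ℤ) - 1) * (x + 1) := by
    rw [← zpow_add_one₀ hx', sub_add_cancel]
  have hode := one_add_mul_deriv_eulerSum_sub hf n m ((x - 1) / 2)
  simp only [eulerForm, Function.comp_apply, factorial_add_div_factorial_sub_succ h, Nat.cast_succ,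
    neg_add', hzpow]
  field_simp
  linear_combination 2 * hode

lemma eq_eulerForm_one_zero (n : ℕ) : legendreP n = eulerForm 1 n 0 := by
  funext x
  simp [legendreP, eulerForm, eulerSum, eulerCoeff, pow_two, add_comm n, Nat.factorial_ne_zero]

lemma taylorForm_zero_eq_eulerForm_zero (f : ℕ → ℝ) (n : ℕ) :
    taylorForm f n 0 = eulerForm f n 0 := by
  funext x
  simp [taylorForm, eulerForm, taylorSum, eulerSum, taylorCoeff, eulerCoeff, Nat.factorial_ne_zero]

lemma iteratedDeriv_eq_eulerForm {m n : ℕ} (h : m ≤ n) {x : ℝ} (hx : x ≠ -1) :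
    iteratedDeriv m (legendreP n) x = eulerForm 1 n m x := by
  rw [eq_eulerForm_one_zero]
  refine iteratedDeriv_eqOn_of_forall_hasDerivAt (F := eulerForm 1 n) isOpen_ne
    (fun k hk y hy => ?_) hx
  simpa using hasDerivAt_eulerForm (f := 1) (c := 0) (by simp) (hk.trans_le h) hy

lemma hasDerivAt_iteratedDeriv (n m : ℕ) (x : ℝ) :
    HasDerivAt (iteratedDeriv m (legendreP n)) (iteratedDeriv (m + 1) (legendreP n) x) x := by
  have hsmooth : ContDiff ℝ (m + 1 : ℕ) (legendreP n) := by
    unfold legendreP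
    fun_prop
  rw [iteratedDeriv_succ]
  exact (hsmooth.differentiable_iteratedDeriv m (by exact_mod_cast m.lt_succ_self) x).hasDerivAt

lemma hasDerivAt_mulLogDeriv {m n : ℕ} (h : m < n) {x : ℝ} (hx : x ≠ -1) :
    HasDerivAt (mulLogDeriv n m) (mulLogDeriv n (m + 1) x) x := by
  have hx' : x + 1 ≠ 0 := fun hx₀ => hx (eq_neg_of_add_eq_zero_left hx₀)
  have hlog : HasDerivAt (fun y : ℝ => log (y + 1)) (1 / (x + 1)) x :=
    ((hasDerivAt_id x).add_const 1).log hx'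
  have hP := hasDerivAt_iteratedDeriv n m x
  have hT := hasDerivAt_taylorForm (fun j => psi (j + 1)) h x
  have hE := hasDerivAt_eulerForm (f := fun j => psi (j + 1)) psi_add_two h hx
  refine ((((hP.mul hlog).sub (hP.const_mul _)).sub hT).add hE).congr_deriv ?_
  rw [mulLogDeriv, psi_second_difference_succ h, ← iteratedDeriv_eq_eulerForm h.le hx,
    ← iteratedDeriv_eq_eulerForm h hx]
  ring

lemma mulLogDeriv_zero (n : ℕ) : mulLogDeriv n 0 = fun y => legendreP n y * log (y + 1) := by
  funext x
  rw [mulLogDeriv, taylorForm_zero_eq_eulerForm_zero, iteratedDeriv_zero, Nat.add_zero,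
    Nat.sub_zero]
  ring

end legendreP

theorem stmt_2_general (m n : ℕ) (hmn : m ≤ n) (x : ℝ) (hx : -1 < x) :
    iteratedDeriv m (fun y => legendreP n y * Real.log (y + 1)) x =
      iteratedDeriv m (legendreP n) x * Real.log (x + 1)
      - (psi (n + m + 1) - 2 * psi (n + 1) + psi (n - m + 1)) *
          iteratedDeriv m (legendreP n) x
      - (2 : ℝ) ^ (-(m : ℤ)) *
          ∑ k ∈ Finset.range (n - m + 1),
            (((k + n + m).factorial : ℝ) * psi (k + m + 1)) /
                ((k.factorial : ℝ) * ((k + m).factorial : ℝ) * ((n - m - k).factorial : ℝ)) *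
              ((x - 1) / 2) ^ k
      + ((n + m).factorial : ℝ) / ((n - m).factorial : ℝ) * (x + 1) ^ (-(m : ℤ)) *
          ∑ k ∈ Finset.range (n + 1),
            (((k + n).factorial : ℝ) * psi (k + m + 1)) /
                ((k.factorial : ℝ) * ((k + m).factorial : ℝ) * ((n - k).factorial : ℝ)) *
              ((x - 1) / 2) ^ k := by
  have hderiv := iteratedDeriv_eqOn_of_forall_hasDerivAt (F := legendreP.mulLogDeriv n) isOpen_Ioi
    (fun k hk y (hy : -1 < y) => legendreP.hasDerivAt_mulLogDeriv (hk.trans_le hmn) hy.ne') hx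
  rw [← legendreP.mulLogDeriv_zero, hderiv]
  simp only [legendreP.mulLogDeriv, legendreP.taylorForm, legendreP.eulerForm, legendreP.taylorSum,
    legendreP.eulerSum, legendreP.taylorCoeff, legendreP.eulerCoeff, mul_div_right_comm]

theorem stmt_2 (m n : ℕ) (hmn : m ≤ n) (x : ℝ) (hx : 1 < x) :
    iteratedDeriv m (fun y => legendreP n y * Real.log (y + 1)) x =
      iteratedDeriv m (legendreP n) x * Real.log (x + 1)
      - (psi (n + m + 1) - 2 * psi (n + 1) + psi (n - m + 1)) *
          iteratedDeriv m (legendreP n) x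
      - (2 : ℝ) ^ (-(m : ℤ)) *
          ∑ k ∈ Finset.range (n - m + 1),
            (((k + n + m).factorial : ℝ) * psi (k + m + 1)) /
                ((k.factorial : ℝ) * ((k + m).factorial : ℝ) * ((n - m - k).factorial : ℝ)) *
              ((x - 1) / 2) ^ k
      + ((n + m).factorial : ℝ) / ((n - m).factorial : ℝ) * (x + 1) ^ (-(m : ℤ)) *
          ∑ k ∈ Finset.range (n + 1),
            (((k + n).factorial : ℝ) * psi (k + m + 1)) /
                ((k.factorial : ℝ) * ((k + m).factorial : ℝ) * ((n - k).factorial : ℝ)) *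
              ((x - 1) / 2) ^ k := by
  exact stmt_2_general m n hmn x (by linarith)
end

section
/- Let m, n be natural numbers with 0 ≤ m ≤ n, and let x > 1 be real. Then d^m/dx^m [P_n(x)·log(x+1)] = P_n^{(m)}(x)·log(x+1) − (−1)^{n+m}·(x+1)^{−m} Σ_{k=0}^{m−1} ((k+n)!·(m−k−1)!)/(k!·(n−k)!) · ((x+1)/2)^k + (−1)^{n+m}·2^{−m} Σ_{k=0}^{n−m} (−1)^k·((k+n+m)!/(k!·(k+m)!·(n−m−k)!))·(H_{k+m} − H_k) · ((x+1)/2)^k, where H_{k+m} − H_k = ψ(k+m+1) − ψ(k+1). -/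
open Finset Real

open scoped Topology

/-!
Reflecting the expansion of `P_n` about `1` gives its expansion in powers of `z = x + 1`, which
reduces the claim to the functions `z ^ k * log z`. In each of the first `k` derivatives, the term
produced by differentiating `log z` adds one `1 / j` to a coefficient, and these accumulate to a
difference of harmonic numbers; the next derivative is `k! / z`, and all later ones are derivatives
of a multiple of `1 / z`.
-/

section MulLog

variable {x : ℝ}

lemma harm_succ (i : ℕ) : harm (i + 1) = harm i + 1 / ((i : ℝ) + 1) :=
  Finset.sum_range_succ _ i

lemma hasDerivAt_pow_succ_mul_log_add (k : ℕ) (c : ℝ) (hx : x ≠ 0) :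
    HasDerivAt (fun y => y ^ (k + 1) * (log y + c))
      ((k + 1) * (x ^ k * (log x + (c + 1 / (k + 1))))) x := by
  refine ((hasDerivAt_pow (k + 1) x).mul ((hasDerivAt_log hx).add_const c)).congr_deriv ?_
  have hk : (k : ℝ) + 1 ≠ 0 := by positivity
  rw [Nat.add_sub_cancel]
  push_cast
  field_simp
  ring

lemma iteratedDeriv_pow_add_mul_log (k m : ℕ) (hx : x ≠ 0) :
    iteratedDeriv m (fun y => y ^ (k + m) * log y) x =
      (k + m).factorial / k.factorial * (x ^ k * (log x + (harm (k + m) - harm k))) := by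
  induction m generalizing k x with
  | zero => simp [Nat.factorial_ne_zero]
  | succ m ih =>
    rw [← add_assoc, add_right_comm k m 1]
    have ih_near : iteratedDeriv m (fun y => y ^ (k + 1 + m) * log y) =ᶠ[𝓝 x] fun y =>
        (k + 1 + m).factorial / (k + 1).factorial *
          (y ^ (k + 1) * (log y + (harm (k + 1 + m) - harm (k + 1)))) := by
      filter_upwards [eventually_ne_nhds hx] with y hy using ih (k + 1) hy
    rw [iteratedDeriv_succ, ih_near.deriv_eq,
      ((hasDerivAt_pow_succ_mul_log_add k _ hx).const_mul _).deriv, harm_succ k,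
      Nat.factorial_succ k]
    push_cast
    field_simp
    ring

lemma iteratedDeriv_succ_pow_mul_log (k : ℕ) (hx : x ≠ 0) :
    iteratedDeriv (k + 1) (fun y => y ^ k * log y) x = k.factorial * x⁻¹ := by
  have deriv_near : iteratedDeriv k (fun y => y ^ k * log y) =ᶠ[𝓝 x] fun y =>
      k.factorial * (log y + harm k) := by
    filter_upwards [eventually_ne_nhds hx] with y hy
    simpa [harm] using iteratedDeriv_pow_add_mul_log 0 k hy
  rw [iteratedDeriv_succ, deriv_near.deriv_eq,
    (((hasDerivAt_log hx).add_const (harm k)).const_mul _).deriv]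

lemma iteratedDeriv_pow_mul_log_of_lt {k m : ℕ} (hkm : k < m) (hx : x ≠ 0) :
    iteratedDeriv m (fun y => y ^ k * log y) x =
      (-1) ^ (m - k - 1) * k.factorial * (m - k - 1).factorial / x ^ (m - k) := by
  obtain ⟨j, rfl⟩ : ∃ j, m = j + (k + 1) := ⟨m - (k + 1), by lia⟩
  have deriv_near : iteratedDeriv (k + 1) (fun y => y ^ k * log y) =ᶠ[𝓝 x] fun y =>
      k.factorial * y⁻¹ := by
    filter_upwards [eventually_ne_nhds hx] with y hy using iteratedDeriv_succ_pow_mul_log k hy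
  calc
    _ = iteratedDeriv j (iteratedDeriv (k + 1) fun y => y ^ k * log y) x := by
      simp only [iteratedDeriv_eq_iterate, Function.iterate_add_apply]
    _ = iteratedDeriv j (fun y => (k.factorial : ℝ) * y⁻¹) x := deriv_near.iteratedDeriv_eq j
    _ = k.factorial * ((-1) ^ j * j.factorial * x ^ (-1 - j : ℤ)) := by
      rw [iteratedDeriv_const_mul_field, iteratedDeriv_eq_iterate, iter_deriv_inv]
    _ = _ := by
      rw [show j + (k + 1) - k = j + 1 by lia, Nat.add_sub_cancel,
        show (-1 - j : ℤ) = -((j + 1 : ℕ) : ℤ) by lia, zpow_neg, zpow_natCast]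
      ring

lemma iteratedDeriv_sum_mul_pow_mul_log (a : ℕ → ℝ) (m l : ℕ) (hx : x ≠ 0) :
    iteratedDeriv m (fun y => (∑ k ∈ range (m + l), a k * y ^ k) * log y) x =
      iteratedDeriv m (fun y => ∑ k ∈ range (m + l), a k * y ^ k) x * log x
      + ∑ k ∈ range m,
          a k * ((-1) ^ (m - k - 1) * k.factorial * (m - k - 1).factorial / x ^ (m - k))
      + ∑ k ∈ range l,
          a (m + k) * ((k + m).factorial / k.factorial * (x ^ k * (harm (k + m) - harm k))) := by
  have low : ∀ k ∈ range m, a k * iteratedDeriv m (fun y => y ^ k * log y) x =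
      a k * iteratedDeriv m (fun y => y ^ k) x * log x
        + a k * ((-1) ^ (m - k - 1) * k.factorial * (m - k - 1).factorial / x ^ (m - k)) := by
    intro k hk
    rw [iteratedDeriv_pow_mul_log_of_lt (mem_range.1 hk) hx, iteratedDeriv_pow,
      Nat.descFactorial_of_lt (mem_range.1 hk)]
    simp
  have high : ∀ k ∈ range l, a (m + k) * iteratedDeriv m (fun y => y ^ (m + k) * log y) x =
      a (m + k) * iteratedDeriv m (fun y => y ^ (m + k)) x * log x
        + a (m + k) * ((k + m).factorial / k.factorial *
          (x ^ k * (harm (k + m) - harm k))) := by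
    intro k _
    rw [add_comm m k, iteratedDeriv_pow_add_mul_log k m hx, iteratedDeriv_pow, Nat.add_sub_cancel,
      Nat.add_descFactorial_eq_ascFactorial, Nat.ascFactorial_eq_div,
      Nat.cast_div (Nat.factorial_dvd_factorial (Nat.le_add_right k m)) (by positivity)]
    ring
  simp only [sum_mul, mul_assoc (a _)]
  rw [iteratedDeriv_fun_sum fun k _ => by fun_prop (disch := exact hx),
    iteratedDeriv_fun_sum fun k _ => by fun_prop]
  simp only [iteratedDeriv_const_mul_field]
  rw [sum_mul, sum_range_add, sum_range_add, sum_congr rfl low, sum_congr rfl high,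
    sum_add_distrib, sum_add_distrib]
  ring

end MulLog

section Legendre

open Polynomial

lemma legendreP_eq_aeval_shiftedLegendre (n : ℕ) (x : ℝ) :
    legendreP n x = aeval ((1 - x) / 2) (shiftedLegendre n) := by
  simp only [legendreP, shiftedLegendre, map_sum, map_mul, map_pow, aeval_X, map_neg, map_one,
    map_natCast]
  refine sum_congr rfl fun k hk => ?_
  have hkn : k ≤ n := Nat.lt_succ_iff.1 (mem_range.1 hk)
  rw [Nat.cast_choose ℝ hkn, Nat.cast_choose ℝ (Nat.le_add_right n k), Nat.add_sub_cancel_left,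
    show (x - 1) / 2 = -1 * ((1 - x) / 2) by ring, mul_pow]
  field_simp

lemma legendreP_neg (n : ℕ) (x : ℝ) : legendreP n (-x) = (-1) ^ n * legendreP n x := by
  rw [legendreP_eq_aeval_shiftedLegendre, legendreP_eq_aeval_shiftedLegendre,
    shiftedLegendre_eval_symm]
  ring_nf

end Legendre

/-- The `k`-th Taylor coefficient at `-1` of the Legendre polynomial `P_n`, through which `P_n` is
written in powers of `x + 1`. It is meant for `k ≤ n`: beyond that, `n - k` is truncated and the
value is not the vanishing coefficient. -/
noncomputable def legendreTaylorCoeff (n k : ℕ) : ℝ :=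
  (-1) ^ (n + k) * ((n + k).factorial / (k.factorial ^ 2 * (n - k).factorial)) / 2 ^ k

lemma legendreP_eq_sum_legendreTaylorCoeff (n : ℕ) (x : ℝ) :
    legendreP n x = ∑ k ∈ range (n + 1), legendreTaylorCoeff n k * (x + 1) ^ k := by
  rw [← neg_neg x, legendreP_neg, legendreP, mul_sum]
  refine sum_congr rfl fun k _ => ?_
  rw [legendreTaylorCoeff, show (-x - 1) / 2 = -1 * ((- -x + 1) / 2) by ring, mul_pow, div_pow,
    pow_add (-1 : ℝ)]
  ring

lemma legendreTaylorCoeff_mul_of_lt (n : ℕ) {k m : ℕ} (hkm : k < m) {z : ℝ} (hz : z ≠ 0) :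
    legendreTaylorCoeff n k *
        ((-1) ^ (m - k - 1) * k.factorial * (m - k - 1).factorial / z ^ (m - k)) =
      -((-1) ^ (n + m) * z ^ (-(m : ℤ)) *
        ((k + n).factorial * (m - k - 1).factorial / (k.factorial * (n - k).factorial) *
          (z / 2) ^ k)) := by
  obtain ⟨j, rfl⟩ : ∃ j, m = k + j + 1 := ⟨m - k - 1, by lia⟩
  have sign : (-1 : ℝ) ^ (n + (k + j + 1)) = -((-1) ^ (n + k) * (-1) ^ j) := by ring
  rw [legendreTaylorCoeff, show k + j + 1 - k = j + 1 by lia, Nat.add_sub_cancel, sign, zpow_neg,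
    zpow_natCast, add_comm k n, add_assoc k j 1, pow_add z k, div_pow]
  field_simp

lemma legendreTaylorCoeff_add_mul (n m k : ℕ) (z h : ℝ) :
    legendreTaylorCoeff n (m + k) * ((k + m).factorial / k.factorial * (z ^ k * h)) =
      (-1) ^ (n + m) * 2 ^ (-(m : ℤ)) *
        ((-1) ^ k * (k + n + m).factorial /
          (k.factorial * (k + m).factorial * (n - m - k).factorial) * h * (z / 2) ^ k) := by
  rw [legendreTaylorCoeff, ← add_assoc n m k, Nat.sub_add_eq, zpow_neg, zpow_natCast,
    add_comm m k, show k + n + m = n + m + k by ring, div_pow, pow_add 2 k m,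
    pow_add (-1) (n + m) k]
  field_simp

/-- For `x < -1` both logarithms stand for `log |x + 1|`, the value of `Real.log` there. -/
theorem stmt_6_general (m n : ℕ) (hmn : m ≤ n) (x : ℝ) (hx : x ≠ -1) :
    iteratedDeriv m (fun y => legendreP n y * Real.log (y + 1)) x =
      iteratedDeriv m (legendreP n) x * Real.log (x + 1)
      - (-1 : ℝ) ^ (n + m) * (x + 1) ^ (-(m : ℤ)) *
          ∑ k ∈ Finset.range m,
            (((k + n).factorial : ℝ) * ((m - k - 1).factorial : ℝ)) /
                ((k.factorial : ℝ) * ((n - k).factorial : ℝ)) * ((x + 1) / 2) ^ k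
      + (-1 : ℝ) ^ (n + m) * (2 : ℝ) ^ (-(m : ℤ)) *
          ∑ k ∈ Finset.range (n - m + 1),
            (-1 : ℝ) ^ k * ((k + n + m).factorial : ℝ) /
                ((k.factorial : ℝ) * ((k + m).factorial : ℝ) * ((n - m - k).factorial : ℝ)) *
              (harm (k + m) - harm k) * ((x + 1) / 2) ^ k := by
  have hz : x + 1 ≠ 0 := fun h => hx (eq_neg_of_add_eq_zero_left h)
  let p : ℝ → ℝ := fun z => ∑ k ∈ range (m + (n - m + 1)), legendreTaylorCoeff n k * z ^ k
  have legendreP_eq : legendreP n = fun y => p (y + 1) := by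
    funext y
    rw [legendreP_eq_sum_legendreTaylorCoeff, show n + 1 = m + (n - m + 1) by lia]
  simp only [legendreP_eq, iteratedDeriv_comp_add_const m (fun z => p z * log z) 1,
    iteratedDeriv_comp_add_const m p 1]
  rw [iteratedDeriv_sum_mul_pow_mul_log _ m _ hz, sub_eq_add_neg, mul_sum, mul_sum,
    ← sum_neg_distrib]
  congr 1
  · congr 1
    exact sum_congr rfl fun k hk => legendreTaylorCoeff_mul_of_lt n (mem_range.1 hk) hz
  · exact sum_congr rfl fun k _ => legendreTaylorCoeff_add_mul n m k _ _

theorem stmt_6 (m n : ℕ) (hmn : m ≤ n) (x : ℝ) (hx : 1 < x) :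
    iteratedDeriv m (fun y => legendreP n y * Real.log (y + 1)) x =
      iteratedDeriv m (legendreP n) x * Real.log (x + 1)
      - (-1 : ℝ) ^ (n + m) * (x + 1) ^ (-(m : ℤ)) *
          ∑ k ∈ Finset.range m,
            (((k + n).factorial : ℝ) * ((m - k - 1).factorial : ℝ)) /
                ((k.factorial : ℝ) * ((n - k).factorial : ℝ)) * ((x + 1) / 2) ^ k
      + (-1 : ℝ) ^ (n + m) * (2 : ℝ) ^ (-(m : ℤ)) *
          ∑ k ∈ Finset.range (n - m + 1),
            (-1 : ℝ) ^ k * ((k + n + m).factorial : ℝ) /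
                ((k.factorial : ℝ) * ((k + m).factorial : ℝ) * ((n - m - k).factorial : ℝ)) *
              (harm (k + m) - harm k) * ((x + 1) / 2) ^ k := by
  exact stmt_6_general m n hmn x (by linarith)
end
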